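/- arXiv:math/0107085 — 2 statements merged into one kernel-verified Lean document; each statement's English description precedes it below -/
import Mathlib

section
/- Baumslag–Solitar groups in Diff^ω₊(ℝ): For any integers n > m ≥ 1, there exists an injective group homomorphism from the Baumslag–Solitar group BS(m,n) = ⟨a, b | a bᵐ a⁻¹ = bⁿ⟩ into the group of orientation-preserving real-analytic diffeomorphisms of ℝ. Equivalently, there exist bijections g, h : ℝ → ℝ, each real-analytic with everywhere positive derivative, satisfying g ∘ hᵐ ∘ g⁻¹ = hⁿ, such that the subgroup of bijections of ℝ generated by g and h is isomorphic to BS(m,n) via a ↦ g, b ↦ h. -/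
/-- The single defining relation of the Baumslag–Solitar group
`BS(m,n) = ⟨a, b | a bᵐ a⁻¹ = bⁿ⟩`, with `a = FreeGroup.of 0` and `b = FreeGroup.of 1`. -/
abbrev BSRels (m n : ℕ) : Set (FreeGroup (Fin 2)) :=
  {FreeGroup.of 0 * FreeGroup.of 1 ^ m * (FreeGroup.of 0)⁻¹ * (FreeGroup.of 1 ^ n)⁻¹}

/-!
`BS(m,n)` is the HNN extension of `ℤ = ⟨b⟩` along the isomorphism `mℤ ≃ nℤ`. Let `b` act on `ℝ` as
`x ↦ x + 1`, and `a` as a diffeomorphism `f` with `f (x + m) = f x + n`, so that the relation holds.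
Take `f` to be, up to affine changes of coordinates, a high power of the lift of a circle
diffeomorphism with north–south dynamics: it then maps the complement of the `1/4`-neighbourhood
of `mℤ` into the `1/4`-neighbourhood of `1/2 + nℤ`. A translation by `k ∈ ℤ` moves either
neighbourhood off the other one, and moves the first (second) off itself unless `m ∣ k` (`n ∣ k`).
Hence the normal form of an element involving `a` sends the base point `1/4` into an integer
translate of one of the two neighbourhoods, and none of these translates contains `1/4`.
-/

open Filter Function Set Topology

section PingPong

open HNNExtension HNNExtension.NormalWord

variable {G H X : Type*} [Group G] [Group H] [MulAction H X] {A B : Subgroup G} {φ : A ≃* B}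

theorem units_zpow_smul_mem {U : ℤˣ → Set X} {τ : H} (hτ : ∀ x ∉ U (-1), τ • x ∈ U 1) (u : ℤˣ)
    {x : X} (hx : x ∉ U (-u)) : τ ^ (u : ℤ) • x ∈ U u := by
  rcases Int.units_eq_one_or u with rfl | rfl
  · simpa using hτ x hx
  · by_contra h
    refine hx ?_
    simpa using hτ _ h

theorem exists_mem_prod_smul_eq_of_ping_pong {ψ : HNNExtension G A B φ →* H} {U : ℤˣ → Set X}
    {x₀ : X} (ht : ∀ x ∉ U (-1), ψ t • x ∈ U 1) (hbase : ∀ g u, ψ (of g) • x₀ ∉ U u)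
    (hopp : ∀ g u, ∀ x ∈ U u, ψ (of g) • x ∉ U (-u))
    (hsame : ∀ u, ∀ g ∉ toSubgroup A B u, ∀ x ∈ U (-u), ψ (of g) • x ∉ U (-u))
    {d : TransversalPair G A B} (w : NormalWord d) :
    ∀ u ∈ w.toList.head?.map Prod.fst, ∃ y ∈ U u, ψ (w.prod φ) • x₀ = ψ (of w.head) • y := by
  induction w using consRecOn with
  | ofGroup g => simp
  | cons g u w hw hred ih =>
    suffices hnot : ψ (w.prod φ) • x₀ ∉ U (-u) by
      simpa [mul_smul] using units_zpow_smul_mem ht u hnot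
    cases hhead : w.toList.head?.map Prod.fst with
    | none =>
      have hnil : w.toList = [] := by simpa using hhead
      simpa [ReducedWord.prod, hnil] using hbase w.head (-u)
    | some u' =>
      obtain ⟨y, hy, hwy⟩ := ih u' hhead
      rw [hwy]
      rcases eq_or_ne u u' with rfl | hne
      · exact hopp _ _ y hy
      · have hu' : u' = -u := by rw [Int.units_ne_iff_eq_neg.1 hne, neg_neg]
        exact hsame u _ (fun hmem => hne (hred u' hhead hmem)) y (hu' ▸ hy)

theorem injective_of_hnn_ping_pong (ψ : HNNExtension G A B φ →* H) (hof : Injective (ψ.comp of))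
    (U : ℤˣ → Set X) (x₀ : X) (ht : ∀ x ∉ U (-1), ψ t • x ∈ U 1)
    (hbase : ∀ g u, ψ (of g) • x₀ ∉ U u)
    (hopp : ∀ g u, ∀ x ∈ U u, ψ (of g) • x ∉ U (-u))
    (hsame : ∀ u, ∀ g ∉ toSubgroup A B u, ∀ x ∈ U (-u), ψ (of g) • x ∉ U (-u)) :
    Injective ψ := by
  refine (injective_iff_map_eq_one ψ).2 fun γ hγ => ?_
  obtain ⟨d⟩ := TransversalPair.nonempty G A B
  obtain ⟨w, rfl⟩ : ∃ w : NormalWord d, w.prod φ = γ := (equiv φ d).symm.surjective γ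
  cases hhead : w.toList.head?.map Prod.fst with
  | none =>
    have hprod : w.prod φ = of w.head := by
      have hnil : w.toList = [] := by simpa using hhead
      simp [ReducedWord.prod, hnil]
    rw [hprod] at hγ ⊢
    rw [(injective_iff_map_eq_one (ψ.comp of)).1 hof w.head hγ, map_one]
  | some u =>
    obtain ⟨y, hy, hwy⟩ := exists_mem_prod_smul_eq_of_ping_pong ht hbase hopp hsame w u hhead
    rw [hγ, one_smul] at hwy
    refine absurd hy ?_
    simpa [hwy] using hbase w.head⁻¹ u

end PingPong

section BaumslagSolitar

open Multiplicative

/-- The isomorphism between the cyclic subgroups generated by two elements of equal order which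
sends `x` to `y`. -/
noncomputable def zpowersEquivOfOrderOfEq {G G' : Type*} [Group G] [Group G'] {x : G} {y : G'}
    (h : orderOf x = orderOf y) : Subgroup.zpowers x ≃* Subgroup.zpowers y :=
  mulEquivOfOrderOfEq (g := ⟨x, Subgroup.mem_zpowers x⟩) (g' := ⟨y, Subgroup.mem_zpowers y⟩)
    (by rintro ⟨_, k, rfl⟩; exact ⟨k, rfl⟩) (by rintro ⟨_, k, rfl⟩; exact ⟨k, rfl⟩)
    (by simpa using h)

theorem zpowersEquivOfOrderOfEq_zpow {G G' : Type*} [Group G] [Group G'] {x : G} {y : G'}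
    (h : orderOf x = orderOf y) (k : ℤ) :
    (zpowersEquivOfOrderOfEq h ⟨x ^ k, Subgroup.zpow_mem_zpowers x k⟩ : G') = y ^ k := by
  have hpow : (⟨x ^ k, Subgroup.zpow_mem_zpowers x k⟩ : Subgroup.zpowers x) =
      ⟨x, Subgroup.mem_zpowers x⟩ ^ k := rfl
  rw [hpow, map_zpow, zpowersEquivOfOrderOfEq, mulEquivOfOrderOfEq_apply_gen]
  rfl

theorem orderOf_ofAdd_natCast {k : ℕ} (hk : k ≠ 0) : orderOf (ofAdd (k : ℤ)) = 0 := by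
  rw [orderOf_eq_zero_iff, isOfFinOrder_iff_eq_one]
  simpa using hk

theorem mem_zpowers_ofAdd_of_dvd {k : ℤ} {g : Multiplicative ℤ} (h : k ∣ g.toAdd) :
    g ∈ Subgroup.zpowers (ofAdd k) := by
  obtain ⟨j, hj⟩ := h
  refine Subgroup.mem_zpowers_iff.2 ⟨j, ?_⟩
  rw [← ofAdd_zsmul, smul_eq_mul, mul_comm, ← hj, ofAdd_toAdd]

variable {m n : ℕ} {H : Type*} [Group H]

/-- The homomorphism `BS(m,n) →* H` determined by two elements `a`, `b` of `H` satisfying the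
Baumslag–Solitar relation. -/
def baumslagSolitarLift (a b : H) (hab : a * b ^ m * a⁻¹ = b ^ n) :
    PresentedGroup (BSRels m n) →* H :=
  PresentedGroup.toGroup (f := ![a, b]) <| by
    rintro _ rfl
    simp [hab]

theorem baumslagSolitar_rel (m n : ℕ) :
    (.of 0 * .of 1 ^ m * (.of 0)⁻¹ : PresentedGroup (BSRels m n)) = .of 1 ^ n :=
  mul_inv_eq_one.1 (PresentedGroup.one_of_mem (mem_singleton _))

@[simp]
theorem baumslagSolitarLift_of_zero (a b : H) (hab : a * b ^ m * a⁻¹ = b ^ n) :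
    baumslagSolitarLift a b hab (.of 0) = a :=
  PresentedGroup.toGroup.of _

@[simp]
theorem baumslagSolitarLift_of_one (a b : H) (hab : a * b ^ m * a⁻¹ = b ^ n) :
    baumslagSolitarLift a b hab (.of 1) = b :=
  PresentedGroup.toGroup.of _

/-- The isomorphism `mℤ ≃ nℤ`, `m ↦ n`, between the associated subgroups in the description of
`BS(m,n)` as an HNN extension of `ℤ`. -/
noncomputable abbrev baumslagSolitarAssoc (hm : m ≠ 0) (hn : n ≠ 0) :
    Subgroup.zpowers (ofAdd (m : ℤ)) ≃* Subgroup.zpowers (ofAdd (n : ℤ)) :=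
  zpowersEquivOfOrderOfEq ((orderOf_ofAdd_natCast hm).trans (orderOf_ofAdd_natCast hn).symm)

/-- `BS(m,n)` as the HNN extension of `ℤ = ⟨b⟩` along `mℤ ≃ nℤ`, the generator `a` being the stable
letter. -/
noncomputable def baumslagSolitarEquivHNN (hm : m ≠ 0) (hn : n ≠ 0) :
    PresentedGroup (BSRels m n) ≃*
      HNNExtension (Multiplicative ℤ) _ _ (baumslagSolitarAssoc hm hn) :=
  MonoidHom.toMulEquiv
    (baumslagSolitarLift HNNExtension.t (HNNExtension.of (ofAdd 1)) <| by
      have h := HNNExtension.equiv_eq_conj (φ := baumslagSolitarAssoc hm hn)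
        ⟨ofAdd (m : ℤ) ^ (1 : ℤ), Subgroup.zpow_mem_zpowers _ _⟩
      rw [zpowersEquivOfOrderOfEq_zpow] at h
      simpa [← map_pow, ← ofAdd_nsmul] using h.symm)
    (HNNExtension.lift (zpowersHom _ (.of 1)) (.of 0) <| by
      rintro ⟨_, k, rfl⟩
      rw [zpowersEquivOfOrderOfEq_zpow, ← mul_inv_eq_iff_eq_mul]
      have h : (.of 0 * (.of 1 ^ m) ^ k * (.of 0)⁻¹ : PresentedGroup (BSRels m n)) =
          (.of 1 ^ n) ^ k := by rw [← conj_zpow, baumslagSolitar_rel]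
      simpa [← zpow_natCast, ← zpow_mul, mul_comm k] using h)
    (PresentedGroup.ext fun i => by fin_cases i <;> simp)
    (HNNExtension.hom_ext (MonoidHom.ext_mint (by simp)) (by simp))

theorem baumslagSolitarEquivHNN_symm_t (hm : m ≠ 0) (hn : n ≠ 0) :
    (baumslagSolitarEquivHNN hm hn).symm HNNExtension.t = .of 0 := by
  simp [baumslagSolitarEquivHNN, MonoidHom.toMulEquiv]

theorem baumslagSolitarEquivHNN_symm_of (hm : m ≠ 0) (hn : n ≠ 0) (g : Multiplicative ℤ) :
    (baumslagSolitarEquivHNN hm hn).symm (HNNExtension.of g) = .of 1 ^ g.toAdd := by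
  simp [baumslagSolitarEquivHNN, MonoidHom.toMulEquiv]

end BaumslagSolitar

section AnalyticDiffeo

/-- The group `Diff^ω₊(ℝ)` of orientation-preserving real-analytic diffeomorphisms of `ℝ`. -/
def analyticDiffeo : Subgroup (Equiv.Perm ℝ) where
  carrier := {f | (∀ x, AnalyticAt ℝ f x) ∧ ∀ x, 0 < deriv f x}
  one_mem' := ⟨fun _ => analyticAt_id, fun x => by simp [Equiv.Perm.coe_one]⟩
  mul_mem' := by
    rintro f g ⟨hf, hf'⟩ ⟨hg, hg'⟩
    refine ⟨fun x => (hf (g x)).comp (hg x), fun x => ?_⟩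
    rw [Equiv.Perm.coe_mul, deriv_comp x (hf _).differentiableAt (hg _).differentiableAt]
    exact mul_pos (hf' _) (hg' _)
  inv_mem' := by
    rintro f ⟨hf, hf'⟩
    refine ⟨fun y => ?_, fun y => ?_⟩ <;> obtain ⟨x, rfl⟩ := f.surjective y
    · rw [← analyticAt_comp_iff_of_deriv_ne_zero (hf x) (hf' x).ne', ← Equiv.Perm.coe_mul,
        inv_mul_cancel]
      exact analyticAt_id
    · have hinv : HasStrictDerivAt (⇑f⁻¹) (deriv f x)⁻¹ (f x) :=
        (hf x).hasStrictDerivAt.to_local_left_inverse (hf' x).ne' (.of_forall fun z => by simp)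
      rw [hinv.hasDerivAt.deriv]
      exact inv_pos.2 (hf' x)

theorem addRight_mem_analyticDiffeo (c : ℝ) : Equiv.addRight c ∈ analyticDiffeo :=
  ⟨fun _ => analyticAt_id.add analyticAt_const, fun x => by simp [Equiv.coe_addRight]⟩

theorem mulLeft₀_mem_analyticDiffeo {s : ℝ} (hs : 0 < s) :
    Equiv.mulLeft₀ s hs.ne' ∈ analyticDiffeo :=
  ⟨fun _ => analyticAt_const.mul analyticAt_id, fun x => by
    change 0 < deriv (fun y => s * y) x
    simpa using hs⟩

end AnalyticDiffeo

section LatticeNhd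

/-- The open `r`-neighbourhood of the arithmetic progression `c + pℤ`; these are the ping-pong
sets. -/
def latticeNhd (c p r : ℝ) : Set ℝ := {x | ∃ j : ℤ, |x - c - p * j| < r}

theorem mul_add_mem_latticeNhd {c p r s : ℝ} (hs : 0 < s) (e x : ℝ) :
    s * x + e ∈ latticeNhd (s * c + e) (s * p) (s * r) ↔ x ∈ latticeNhd c p r := by
  refine exists_congr fun j => ?_
  rw [show s * x + e - (s * c + e) - s * p * j = s * (x - c - p * j) by ring, abs_mul,
    abs_of_pos hs, mul_lt_mul_iff_right₀ hs]

theorem latticeNhd_subset_latticeNhd_one (c : ℝ) (p : ℕ) (r : ℝ) :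
    latticeNhd c p r ⊆ latticeNhd c 1 r := by
  rintro x ⟨j, hj⟩
  exact ⟨p * j, by push_cast; rwa [one_mul]⟩

theorem mem_latticeNhd_one_of_add_intCast_mem {c r x : ℝ} {p : ℕ} {k : ℤ}
    (hx : x + k ∈ latticeNhd c p r) : x ∈ latticeNhd c 1 r := by
  obtain ⟨j, hj⟩ := hx
  refine ⟨p * j - k, ?_⟩
  push_cast
  rwa [show x - c - 1 * (p * j - k) = x + k - c - p * j by ring]

theorem disjoint_latticeNhd_zero_half {r : ℝ} (hr : r ≤ 1 / 4) :
    Disjoint (latticeNhd 0 1 r) (latticeNhd (1 / 2) 1 r) := by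
  rw [Set.disjoint_left]
  rintro x ⟨i, hi⟩ ⟨j, hj⟩
  rw [abs_lt] at hi hj
  have hpos : (j : ℝ) < i := by linarith
  have hlt : (i : ℝ) < j + 1 := by linarith
  norm_cast at hpos hlt
  omega

theorem dvd_of_add_mem_latticeNhd {c r x : ℝ} {p : ℕ} {k : ℤ} (hr : r ≤ 1 / 2)
    (hx : x ∈ latticeNhd c p r) (hxk : x + k ∈ latticeNhd c p r) : (p : ℤ) ∣ k := by
  obtain ⟨i, hi⟩ := hx
  obtain ⟨j, hj⟩ := hxk
  rw [abs_lt] at hi hj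
  have hzero : k - p * (j - i) = 0 := by
    rw [← Int.abs_lt_one_iff, abs_lt]
    rify
    constructor <;> linarith
  exact ⟨j - i, by linarith⟩

theorem notMem_latticeNhd_one_of_abs_sub_eq {c r x : ℝ} (hr : r ≤ 1 / 2) (hx : |x - c| = r) :
    x ∉ latticeNhd c 1 r := by
  rintro ⟨j, hj⟩
  rw [abs_lt, one_mul] at hj
  rcases abs_choice (x - c) with h | h
  · have hpos : (0 : ℝ) < j := by linarith
    have hlt : (j : ℝ) < 1 := by linarith
    norm_cast at hpos hlt
    omega
  · have hneg : (j : ℝ) < 0 := by linarith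
    have hlt : (-1 : ℝ) < j := by linarith
    norm_cast at hneg hlt
    omega

end LatticeNhd

section NorthSouth

theorem tendsto_iterate_of_map_mem_Ico {α : Type*} [ConditionallyCompleteLinearOrder α]
    [TopologicalSpace α] [OrderTopology α] {f : α → α} (hf : Continuous f) {a b : α} (hab : a ≤ b)
    (ha : f a = a) (h : ∀ x ∈ Ioc a b, f x ∈ Ico a x) :
    Tendsto (fun k => f^[k] b) atTop (𝓝 a) := by
  have hmaps : MapsTo f (Icc a b) (Icc a b) := by
    rintro x ⟨hax, hxb⟩
    rcases hax.eq_or_lt with rfl | hax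
    · exact ha.symm ▸ ⟨le_rfl, hab⟩
    · exact ⟨(h x ⟨hax, hxb⟩).1, (h x ⟨hax, hxb⟩).2.le.trans hxb⟩
  have hmem (k : ℕ) : f^[k] b ∈ Icc a b := hmaps.iterate k ⟨hab, le_rfl⟩
  have hle {x : α} (hx : x ∈ Icc a b) : f x ≤ x := by
    rcases hx.1.eq_or_lt with rfl | hax
    · exact ha.le
    · exact (h x ⟨hax, hx.2⟩).2.le
  have hanti : Antitone fun k => f^[k] b := antitone_nat_of_succ_le fun k => by
    rw [iterate_succ_apply']
    exact hle (hmem k)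
  have hlim := tendsto_atTop_ciInf hanti ⟨a, by rintro _ ⟨k, rfl⟩; exact (hmem k).1⟩
  have hfix : f (⨅ k, f^[k] b) = ⨅ k, f^[k] b := isFixedPt_of_tendsto_iterate hlim hf.continuousAt
  have hlim_mem : ⨅ k, f^[k] b ∈ Icc a b := isClosed_Icc.mem_of_tendsto hlim (.of_forall hmem)
  rcases hlim_mem.1.eq_or_lt with heq | hlt
  · rwa [← heq] at hlim
  · exact absurd hfix (h _ ⟨hlt, hlim_mem.2⟩).2.ne

open Real

/-- Lift to `ℝ` of a circle diffeomorphism with north–south dynamics: `0` is attracting and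
`1 / 2` is repelling. -/
noncomputable def northSouthFun (x : ℝ) : ℝ := x - sin (2 * π * x) / (4 * π)

theorem hasDerivAt_northSouthFun (x : ℝ) :
    HasDerivAt northSouthFun (1 - cos (2 * π * x) / 2) x := by
  have h := (hasDerivAt_id x).sub ((((hasDerivAt_id x).const_mul (2 * π)).sin).div_const (4 * π))
  refine h.congr_deriv ?_
  simp only [id_eq]
  field_simp
  ring

theorem continuous_northSouthFun : Continuous northSouthFun :=
  continuous_iff_continuousAt.2 fun x => (hasDerivAt_northSouthFun x).continuousAt

theorem deriv_northSouthFun_pos (x : ℝ) : 0 < deriv northSouthFun x := by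
  rw [(hasDerivAt_northSouthFun x).deriv]
  linarith [cos_le_one (2 * π * x)]

theorem strictMono_northSouthFun : StrictMono northSouthFun :=
  strictMono_of_deriv_pos deriv_northSouthFun_pos

theorem abs_sin_div_four_pi_le_one (x : ℝ) : |sin x / (4 * π)| ≤ 1 := by
  have hpos : 0 < 4 * π := by positivity
  rw [abs_div, abs_of_pos hpos]
  exact div_le_one_of_le₀ (by linarith [abs_sin_le_one x, pi_gt_three]) hpos.le

theorem surjective_northSouthFun : Surjective northSouthFun := by
  have hbound (x : ℝ) := abs_le.1 (abs_sin_div_four_pi_le_one (2 * π * x))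
  refine continuous_northSouthFun.surjective ?_ ?_
  · refine tendsto_atTop_mono (fun x => ?_) (tendsto_atTop_add_const_right atTop (-1) tendsto_id)
    simp only [id, northSouthFun]
    linarith [(hbound x).2]
  · refine tendsto_atBot_mono (fun x => ?_) (tendsto_atBot_add_const_right atBot 1 tendsto_id)
    simp only [id, northSouthFun]
    linarith [(hbound x).1]

/-- `northSouthFun` as a bijection of `ℝ`, to be iterated inside `Diff^ω₊(ℝ)`. -/
noncomputable def northSouth : Equiv.Perm ℝ :=
  .ofBijective northSouthFun ⟨strictMono_northSouthFun.injective, surjective_northSouthFun⟩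

theorem northSouth_mem_analyticDiffeo : northSouth ∈ analyticDiffeo := by
  refine ⟨fun x => ?_, deriv_northSouthFun_pos⟩
  change AnalyticAt ℝ (fun x => x - sin (2 * π * x) / (4 * π)) x
  fun_prop

theorem northSouth_apply (x : ℝ) : northSouth x = x - sin (2 * π * x) / (4 * π) := rfl

theorem commute_northSouth_addRight_one : Commute northSouth (Equiv.addRight 1) := by
  ext x
  simp only [Equiv.Perm.mul_apply, Equiv.coe_addRight, northSouth_apply, mul_add, mul_one,
    sin_add_two_pi]
  ring

theorem northSouth_pow_add_intCast (k : ℕ) (x : ℝ) (j : ℤ) :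
    (northSouth ^ k) (x + j) = (northSouth ^ k) x + j := by
  have h := (commute_northSouth_addRight_one.pow_left k).zpow_right j
  simpa using congr($h x)

theorem northSouth_neg (x : ℝ) : northSouth (-x) = -northSouth x := by
  simp only [northSouth_apply, mul_neg, sin_neg]
  ring

theorem northSouth_pow_neg (k : ℕ) (x : ℝ) : (northSouth ^ k) (-x) = -(northSouth ^ k) x := by
  rw [Equiv.Perm.coe_pow]
  exact (Function.Commute.iterate_left (g := Neg.neg) northSouth_neg k) x

theorem tendsto_northSouth_pow {r : ℝ} (hr : 0 ≤ r) (hr' : r < 1 / 2) :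
    Tendsto (fun k => (northSouth ^ k) r) atTop (𝓝 0) := by
  simp only [Equiv.Perm.coe_pow]
  have hzero : northSouth 0 = 0 := by simp [northSouth_apply]
  refine tendsto_iterate_of_map_mem_Ico continuous_northSouthFun hr hzero
    fun x ⟨hx, hxr⟩ => ⟨?_, ?_⟩
  · exact hzero.symm.le.trans (strictMono_northSouthFun.monotone hx.le)
  · have hsin : 0 < sin (2 * π * x) :=
      sin_pos_of_pos_of_lt_pi (by positivity) (by nlinarith [pi_pos])
    exact sub_lt_self _ (by positivity)

theorem exists_northSouth_pow_mem_latticeNhd {δ ε : ℝ} (hδ : 0 < δ) (hε : 0 < ε) :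
    ∃ k : ℕ, ∀ z ∉ latticeNhd (1 / 2) 1 δ, (northSouth ^ k) z ∈ latticeNhd 0 1 ε := by
  obtain ⟨k, hk⟩ := ((tendsto_northSouth_pow (le_max_right (1 / 2 - δ) 0)
    (max_lt (by linarith) (by norm_num))).eventually_lt_const hε).exists
  refine ⟨k, fun z hz => ⟨round z, ?_⟩⟩
  simp only [latticeNhd, mem_ofPred_eq, not_exists, not_lt, one_mul] at hz
  set y := z - round z with hy
  have hmono : Monotone (northSouth ^ k) := by
    rw [Equiv.Perm.coe_pow]
    exact strictMono_northSouthFun.monotone.iterate k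
  have hyδ : |y| ≤ max (1 / 2 - δ) 0 := by
    obtain ⟨hlow, hupp⟩ := abs_le.1 (abs_sub_round z)
    have hright := hz (round z)
    have hleft := hz (round z - 1)
    rw [abs_of_nonpos (by linarith)] at hright
    rw [abs_of_nonneg (by push_cast; linarith)] at hleft
    push_cast at hleft
    rw [le_max_iff, abs_le]
    left
    constructor <;> linarith
  have hsplit : (northSouth ^ k) z - 0 - 1 * round z = (northSouth ^ k) y := by
    rw [← sub_add_cancel z (round z : ℝ), northSouth_pow_add_intCast]
    simp [hy]
  rw [hsplit]
  refine lt_of_le_of_lt (abs_le.2 ?_) hk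
  rw [← northSouth_pow_neg]
  exact ⟨hmono (abs_le.1 hyδ).1, hmono (abs_le.1 hyδ).2⟩

theorem exists_analyticDiffeo_map_latticeNhd {p q r s : ℝ} (hp : 0 < p) (hq : 0 < q) (hr : 0 < r)
    (hs : 0 < s) (c c' : ℝ) :
    ∃ f ∈ analyticDiffeo, (∀ x, f (x + p) = f x + q) ∧
      ∀ x ∉ latticeNhd c p r, f x ∈ latticeNhd c' q s := by
  obtain ⟨k, hk⟩ := exists_northSouth_pow_mem_latticeNhd (div_pos hr hp) (div_pos hs hq)
  let f : Equiv.Perm ℝ := Equiv.addRight c' * Equiv.mulLeft₀ q hq.ne' * northSouth ^ k *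
    Equiv.addRight (1 / 2 - p⁻¹ * c) * Equiv.mulLeft₀ p⁻¹ (inv_pos.2 hp).ne'
  have hf_apply (x : ℝ) :
      f x = q * (northSouth ^ k) (p⁻¹ * x + (1 / 2 - p⁻¹ * c)) + c' := rfl
  refine ⟨f, ?_, fun x => ?_, fun x hx => ?_⟩
  · exact mul_mem (mul_mem (mul_mem (mul_mem (addRight_mem_analyticDiffeo _)
      (mulLeft₀_mem_analyticDiffeo hq)) (pow_mem northSouth_mem_analyticDiffeo k))
      (addRight_mem_analyticDiffeo _)) (mulLeft₀_mem_analyticDiffeo (inv_pos.2 hp))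
  · have hshift : p⁻¹ * (x + p) + (1 / 2 - p⁻¹ * c) =
        p⁻¹ * x + (1 / 2 - p⁻¹ * c) + (1 : ℤ) := by
      push_cast
      field_simp
      ring
    rw [hf_apply, hf_apply, hshift, northSouth_pow_add_intCast]
    push_cast
    ring
  · rw [← mul_add_mem_latticeNhd (inv_pos.2 hp) (1 / 2 - p⁻¹ * c), add_sub_cancel,
      inv_mul_cancel₀ hp.ne', inv_mul_eq_div p r] at hx
    have hfx := (mul_add_mem_latticeNhd hq c' _).2 (hk _ hx)
    rwa [mul_zero, zero_add, mul_one, mul_div_cancel₀ s hq.ne', ← hf_apply] at hfx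

end NorthSouth

section Embedding

theorem zpow_smul_eq_add_intCast {H : Type*} [Group H] [MulAction H ℝ] {b : H}
    (hb : ∀ x : ℝ, b • x = x + 1) (k : ℤ) (x : ℝ) : b ^ k • x = x + k := by
  have hperm : MulAction.toPermHom H ℝ b = Equiv.addRight 1 := Equiv.ext hb
  have hpow : MulAction.toPermHom H ℝ (b ^ k) x = (Equiv.addRight (1 : ℝ) ^ k) x := by
    rw [map_zpow, hperm]
  simpa using hpow

theorem injective_of_baumslagSolitar_ping_pong {m n : ℕ} (hm : m ≠ 0) (hn : n ≠ 0) {H : Type*}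
    [Group H] [MulAction H ℝ] (ψ : PresentedGroup (BSRels m n) →* H)
    (hb : ∀ x : ℝ, ψ (.of 1) • x = x + 1)
    (ha : ∀ x ∉ latticeNhd 0 m (1 / 4), ψ (.of 0) • x ∈ latticeNhd (1 / 2) n (1 / 4)) :
    Injective ψ := by
  let e := baumslagSolitarEquivHNN hm hn
  let U : ℤˣ → Set ℝ := fun u =>
    if u = 1 then latticeNhd (1 / 2) n (1 / 4) else latticeNhd 0 m (1 / 4)
  have hof (g : Multiplicative ℤ) (x : ℝ) :
      ψ (e.symm (HNNExtension.of g)) • x = x + g.toAdd := by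
    rw [baumslagSolitarEquivHNN_symm_of, map_zpow, zpow_smul_eq_add_intCast hb]
  have hdisj := Set.disjoint_left.1 (disjoint_latticeNhd_zero_half le_rfl)
  suffices h : Injective (ψ.comp e.symm.toMonoidHom) by
    simpa using h.comp e.injective
  refine injective_of_hnn_ping_pong _ (fun g g' hgg' => ?_) U (1 / 4) (fun x hx => ?_)
    (fun g u hg => ?_) (fun g u x hx hgx => ?_) (fun u g hg x hx hgx => hg ?_)
  · simpa [hof] using congr($hgg' • (0 : ℝ))
  · change ψ (e.symm HNNExtension.t) • x ∈ _
    rw [baumslagSolitarEquivHNN_symm_t]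
    exact ha x hx
  · replace hg : 1 / 4 + (g.toAdd : ℝ) ∈ U u := hof g _ ▸ hg
    rcases Int.units_eq_one_or u with rfl | rfl <;>
      refine notMem_latticeNhd_one_of_abs_sub_eq (by norm_num) ?_
        (mem_latticeNhd_one_of_add_intCast_mem hg) <;>
      norm_num [abs_of_neg]
  · replace hgx : x + g.toAdd ∈ U (-u) := hof g x ▸ hgx
    rcases Int.units_eq_one_or u with rfl | rfl
    · exact hdisj (mem_latticeNhd_one_of_add_intCast_mem hgx)
        (latticeNhd_subset_latticeNhd_one _ n _ hx)
    · exact hdisj (latticeNhd_subset_latticeNhd_one _ m _ hx)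
        (mem_latticeNhd_one_of_add_intCast_mem hgx)
  · replace hgx : x + g.toAdd ∈ U (-u) := hof g x ▸ hgx
    rcases Int.units_eq_one_or u with rfl | rfl <;>
      exact mem_zpowers_ofAdd_of_dvd (dvd_of_add_mem_latticeNhd (by norm_num) hx hgx)

end Embedding

theorem bs_subgroup_of_analytic_diffeos_general (m n : ℕ) (hm : 1 ≤ m) (hn : 1 ≤ n) :
    ∃ φ : PresentedGroup (BSRels m n) →* Equiv.Perm ℝ,
      Function.Injective φ ∧
      ∀ w, (∀ x : ℝ, AnalyticAt ℝ (φ w) x) ∧ (∀ x : ℝ, 0 < deriv (φ w) x) := by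
  obtain ⟨f, hf, hf_add, hf_mem⟩ := exists_analyticDiffeo_map_latticeNhd (p := m) (q := n)
    (r := 1 / 4) (s := 1 / 4) (by positivity) (by positivity) (by norm_num) (by norm_num) 0 (1 / 2)
  let a : analyticDiffeo := ⟨f, hf⟩
  let b : analyticDiffeo := ⟨Equiv.addRight 1, addRight_mem_analyticDiffeo 1⟩
  have hrel : a * b ^ m * a⁻¹ = b ^ n := by
    rw [mul_inv_eq_iff_eq_mul]
    ext x
    simpa [a, b] using hf_add x
  let ψ : PresentedGroup (BSRels m n) →* analyticDiffeo := baumslagSolitarLift a b hrel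
  have hψ : Injective ψ := injective_of_baumslagSolitar_ping_pong (by omega) (by omega) ψ
    (fun x => by rw [baumslagSolitarLift_of_one]; rfl)
    (fun x hx => by rw [baumslagSolitarLift_of_zero]; exact hf_mem x hx)
  exact ⟨analyticDiffeo.subtype.comp ψ, Subtype.val_injective.comp hψ, fun w => (ψ w).2⟩

/-- **Baumslag–Solitar groups of real-analytic diffeomorphisms of `ℝ`.** For any
integers `n > m ≥ 1`, there is an injective group homomorphism from
`BS(m,n) = ⟨a, b | a bᵐ a⁻¹ = bⁿ⟩` into the group of bijections of `ℝ`, all of whose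
values are orientation-preserving real-analytic diffeomorphisms of `ℝ` (real-analytic
with everywhere positive derivative). -/
theorem bs_subgroup_of_analytic_diffeos (m n : ℕ) (hm : 1 ≤ m) (hmn : m < n) :
    ∃ φ : PresentedGroup (BSRels m n) →* Equiv.Perm ℝ,
      Function.Injective φ ∧
      ∀ w, (∀ x : ℝ, AnalyticAt ℝ (φ w) x) ∧ (∀ x : ℝ, 0 < deriv (φ w) x) := by
  exact bs_subgroup_of_analytic_diffeos_general m n hm (hm.trans hmn.le)
end

section
/- Suppose g and h are orientation-preserving homeomorphisms of the circle S¹ = ℝ/ℤ satisfying g ∘ hᵐ ∘ g⁻¹ = hⁿ, where m and n are positive integers with m ≠ n. Then h has a periodic point whose period divides |n − m|; in particular, the rotation number of h is rational of the form p/(m−n) mod 1 for some integer p. -/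
/-!
Write `τ` for the translation number of a lift. Lifting `g ∘ hᵐ = hⁿ ∘ g` to `ℝ` gives
`G ∘ Hᵐ = Hⁿ ∘ G + k`, where `k` is a continuous integer-valued function, hence a constant. So
`Hᵐ` is semiconjugate to `Hⁿ + k`, and comparing translation numbers gives `m * τ H = n * τ H + k`.
Thus `H ^ |n - m|` has integer translation number `± k`, and a continuous lift with integer
translation number moves some point by exactly that integer.
-/

open Function

theorem exists_int_forall_eq_add_zsmul_of_coe_eq {X 𝕜 : Type*} [TopologicalSpace X]
    [PreconnectedSpace X] [AddCommGroup 𝕜] [TopologicalSpace 𝕜] [IsTopologicalAddGroup 𝕜] {p : 𝕜}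
    [DiscreteTopology (AddSubgroup.zmultiples p)] {u v : X → 𝕜} (hu : Continuous u)
    (hv : Continuous v) (huv : ∀ x, (u x : AddCircle p) = v x) :
    ∃ k : ℤ, ∀ x, u x = v x + k • p := by
  rcases isEmpty_or_nonempty X with _ | ⟨⟨x₀⟩⟩
  · exact ⟨0, isEmptyElim⟩
  obtain ⟨k, hk⟩ : ∃ k : ℤ, k • p = u x₀ - v x₀ := by
    rw [← AddCircle.coe_eq_zero_iff, AddCircle.coe_sub, huv, sub_self]
  have hcomp : ((↑) : 𝕜 → AddCircle p) ∘ u = (↑) ∘ fun x ↦ v x + k • p := by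
    ext x
    simp [huv]
  have hbase : u x₀ = v x₀ + k • p := by rw [hk, add_sub_cancel]
  exact ⟨k, congrFun <|
    (AddCircle.isCoveringMap_coe p).eq_of_comp_eq hu (hv.add_const _) hcomp x₀ hbase⟩

theorem translationNumber_eq_add_int_of_map_eq_add_int {F F' G : CircleDeg1Lift} {k : ℤ}
    (h : ∀ x, G (F x) = F' (G x) + k) :
    F.translationNumber = F'.translationNumber + k := by
  set T : CircleDeg1Liftˣ := CircleDeg1Lift.translate (Multiplicative.ofAdd (k : ℝ))
  have hsemi : Semiconj G F (T * F' : CircleDeg1Lift) := fun x ↦ (h x).trans (add_comm _ _)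
  have hcomm : Commute (T : CircleDeg1Lift) F' :=
    CircleDeg1Lift.commute_iff_commute.2 fun x ↦ (F'.map_int_add k x).symm
  rw [CircleDeg1Lift.translationNumber_eq_of_semiconj hsemi,
    CircleDeg1Lift.translationNumber_mul_of_commute hcomm,
    CircleDeg1Lift.translationNumber_translate, add_comm]

/-- `F` is a lift to `ℝ` of the circle map `f`, expressed as a semiconjugacy by the projection
`ℝ → ℝ/ℤ`. -/
def IsCircleLift (F : CircleDeg1Lift) (f : AddCircle (1 : ℝ) → AddCircle (1 : ℝ)) : Prop :=
  Semiconj ((↑) : ℝ → AddCircle (1 : ℝ)) F f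

namespace IsCircleLift

variable {F F' G : CircleDeg1Lift} {f f' g : AddCircle (1 : ℝ) → AddCircle (1 : ℝ)}

theorem mul (hF : IsCircleLift F f) (hG : IsCircleLift G g) : IsCircleLift (F * G) (f ∘ g) :=
  hF.comp_right hG

theorem pow (hF : IsCircleLift F f) (n : ℕ) : IsCircleLift (F ^ n) f^[n] := by
  rw [IsCircleLift, CircleDeg1Lift.coe_pow]
  exact hF.iterate_right n

theorem exists_int_forall_eq_add (hF : IsCircleLift F f) (hF' : IsCircleLift F' f)
    (hFc : Continuous F) (hF'c : Continuous F') : ∃ k : ℤ, ∀ x, F x = F' x + k := by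
  simpa only [zsmul_one] using
    exists_int_forall_eq_add_zsmul_of_coe_eq hFc hF'c fun x ↦ (hF x).trans (hF' x).symm

theorem exists_translationNumber_eq_add_int_of_semiconj (hF : IsCircleLift F f)
    (hF' : IsCircleLift F' f') (hG : IsCircleLift G g) (hFc : Continuous F) (hF'c : Continuous F')
    (hGc : Continuous G) (h : Semiconj g f f') :
    ∃ k : ℤ, F.translationNumber = F'.translationNumber + k := by
  have hF'G : IsCircleLift (F' * G) (g ∘ f) := h.comp_eq ▸ hF'.mul hG
  obtain ⟨k, hk⟩ := (hG.mul hF).exists_int_forall_eq_add hF'G (hGc.comp hFc) (hF'c.comp hGc)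
  exact ⟨k, translationNumber_eq_add_int_of_map_eq_add_int hk⟩

theorem exists_isFixedPt_iff (hF : IsCircleLift F f) (hFc : Continuous F) :
    (∃ p, IsFixedPt f p) ↔ ∃ k : ℤ, F.translationNumber = k := by
  have coe_isFixedPt (x : ℝ) : IsFixedPt f x ↔ ∃ k : ℤ, F x = x + k := by
    rw [IsFixedPt, ← hF x, ← sub_eq_zero, ← AddCircle.coe_sub, AddCircle.coe_eq_zero_iff]
    simp only [zsmul_one, eq_sub_iff_add_eq', eq_comm]
  rw [QuotientAddGroup.mk_surjective.exists]
  simp only [F.translationNumber_eq_int_iff hFc]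
  rw [exists_comm]
  exact exists_congr coe_isFixedPt

end IsCircleLift

theorem bs_relation_on_circle_periodic_point_general {m n : ℕ} (hmn : m ≠ n)
    {g h : AddCircle (1 : ℝ) → AddCircle (1 : ℝ)} {G H : CircleDeg1Lift}
    (hG : IsCircleLift G g) (hH : IsCircleLift H h) (hGc : Continuous G) (hHc : Continuous H)
    (hrel : Semiconj g h^[m] h^[n]) :
    (∃ p, IsPeriodicPt h ((n : ℤ) - (m : ℤ)).natAbs p) ∧
    ∃ p : ℤ, H.translationNumber = (p : ℝ) / ((m : ℝ) - (n : ℝ)) := by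
  obtain ⟨k, hk⟩ := (hH.pow m).exists_translationNumber_eq_add_int_of_semiconj (hH.pow n) hG
    (H.continuous_pow hHc m) (H.continuous_pow hHc n) hGc hrel
  rw [H.translationNumber_pow, H.translationNumber_pow] at hk
  set d := ((n : ℤ) - m).natAbs
  have hτd : ∃ l : ℤ, (H ^ d).translationNumber = l := by
    rw [H.translationNumber_pow]
    have hd : (d : ℝ) = |(n : ℝ) - m| := by simp [d, Nat.cast_natAbs]
    rcases abs_choice ((n : ℝ) - m) with habs | habs
    · exact ⟨-k, by rw [hd, habs]; push_cast; linarith⟩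
    · exact ⟨k, by rw [hd, habs]; linarith⟩
  have hmn' : (m : ℝ) - n ≠ 0 := sub_ne_zero.2 (mod_cast hmn)
  exact ⟨((hH.pow d).exists_isFixedPt_iff (H.continuous_pow hHc d)).2 hτd,
    k, by rw [eq_div_iff hmn']; linarith⟩

/-- **Periodic points from the Baumslag–Solitar relation on the circle.** Suppose `g`
and `h` are orientation-preserving homeomorphisms of `S¹ = ℝ/ℤ` (given by lifts `G`,
`H` which are increasing homeomorphisms of `ℝ` commuting with `x ↦ x + 1`) satisfying
`g ∘ hᵐ ∘ g⁻¹ = hⁿ` with `m, n` positive and `m ≠ n`.  Then `h` has a periodic point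
whose period divides `|n − m|` (equivalently, `h^|n−m|` has a fixed point), and the
translation number of the lift `H` equals `p / (m − n)` for some integer `p` (so the
rotation number of `h` is `p/(m−n)` mod 1). -/
theorem bs_relation_on_circle_periodic_point (m n : ℕ) (hm : 0 < m) (hn : 0 < n)
    (hmn : m ≠ n)
    (g h : Equiv.Perm (AddCircle (1 : ℝ))) (G H : ℝ → ℝ)
    (hGm : Monotone G) (hHm : Monotone H)
    (hGsm : StrictMono G) (hHsm : StrictMono H)
    (hGs : Function.Surjective G) (hHs : Function.Surjective H)
    (hGT : ∀ x, G (x + 1) = G x + 1) (hHT : ∀ x, H (x + 1) = H x + 1)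
    (hgG : ∀ x : ℝ, g ↑x = ↑(G x)) (hhH : ∀ x : ℝ, h ↑x = ↑(H x))
    (hrel : g * h ^ m * g⁻¹ = h ^ n) :
    (∃ p : AddCircle (1 : ℝ), (h ^ ((n : ℤ) - (m : ℤ)).natAbs) p = p) ∧
    ∃ p : ℤ, (⟨⟨H, hHm⟩, hHT⟩ : CircleDeg1Lift).translationNumber =
      (p : ℝ) / ((m : ℝ) - (n : ℝ)) := by
  have hsemi : Semiconj g h^[m] h^[n] := fun x ↦
    DFunLike.congr_fun (mul_inv_eq_iff_eq_mul.1 hrel) x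
  exact bs_relation_on_circle_periodic_point_general (G := ⟨⟨G, hGm⟩, hGT⟩)
    (H := ⟨⟨H, hHm⟩, hHT⟩) hmn (fun x ↦ (hgG x).symm) (fun x ↦ (hhH x).symm)
    (hGm.continuous_of_surjective hGs) (hHm.continuous_of_surjective hHs) hsemi
end
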